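/- Let α = 12914/6541 and γ = 10635/4441. Assume (C_w)_{w∈Λ} are nonnegative real numbers such that for every v ∈ Λ, C_v ≤ 10635, either C_v = 0 or C_v ≥ 4441, and α·C_v ≤ min_{a∈A} Σ_{b∈A, vab ∈ S^{≤p}_free} C_{Λ(vab)}. Fix any Ben strategy φ, and let S_n and the weights Ŝ_n be defined from φ and (C_w) as in the context. Then for all n ≥ 1, Ŝ_{n+1} ≥ (9/5)·Ŝ_n. -/

import Mathlib

open scoped Classical

/-- `w` contains a factor that is a square of period between `lo` and `hi`. -/
def HasSq {A : Type*} (lo hi : ℕ) (w : List A) : Prop :=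
  ∃ u : List A, lo ≤ u.length ∧ u.length ≤ hi ∧ (u ++ u) <:+: w

/-- `w` is a square of period between `lo` and `hi`. -/
def IsSq {A : Type*} (lo hi : ℕ) (w : List A) : Prop :=
  ∃ u : List A, lo ≤ u.length ∧ u.length ≤ hi ∧ w = u ++ u

/-- `w` is a minimal square of period between `lo` and `hi`: it is such a square and no
proper factor of it is such a square. -/
def MinSq {A : Type*} (lo hi : ℕ) (w : List A) : Prop :=
  IsSq lo hi w ∧ ∀ f : List A, f <:+: w → f ≠ w → ¬ IsSq lo hi f

/-- A word is normalized if it is lexicographically least among its images under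
permutations of the alphabet. -/
def Normalized {A : Type*} [LinearOrder A] (w : List A) : Prop :=
  ∀ π : Equiv.Perm A, ¬ List.Lex (· < ·) (w.map π) w

/-- `Λ`: the set of normalized words that are proper prefixes of minimal squares of
period between `lo` and `hi`. -/
def Lam {A : Type*} [LinearOrder A] (lo hi : ℕ) : Set (List A) :=
  {w | Normalized w ∧ ∃ s : List A, MinSq lo hi s ∧ w <+: s ∧ w ≠ s}

/-- `Λ(w)`: the longest element of `Λ` that is, up to a permutation of the alphabet,
a suffix of `w`. -/
noncomputable def lamOf {A : Type*} [LinearOrder A] (lo hi : ℕ) (w : List A) : List A :=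
  if h : ∃ v : List A,
      (v ∈ Lam lo hi ∧ ∃ π : Equiv.Perm A, v.map π <:+ w) ∧
      ∀ v' : List A, (v' ∈ Lam lo hi ∧ ∃ π : Equiv.Perm A, v'.map π <:+ w) →
        v'.length ≤ v.length
  then h.choose else []

/-- A `2⁻`-power: a word of length at least 3 that becomes a square after appending
a suitable letter. -/
def TwoMinusPower {A : Type*} (v : List A) : Prop :=
  3 ≤ v.length ∧ ∃ a : A, ∃ u : List A, u ≠ [] ∧ v ++ [a] = u ++ u

/-- `w` ends with a `2⁻`-power. -/
def EndsWithTMP {A : Type*} (w : List A) : Prop :=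
  ∃ v : List A, v <:+ w ∧ TwoMinusPower v

/-- The conditions required of every word obtained just after one of Ann's moves in
the nonrepetitive game over `Fin 4`: it contains no square of period at least 2, its
weight `C_{Λ(u)}` is positive, and it does not end with a `2⁻`-power. -/
def GoodNR (C : List (Fin 4) → ℝ) (u : List (Fin 4)) : Prop :=
  (∀ x : List (Fin 4), 2 ≤ x.length → ¬ (x ++ x) <:+: u) ∧
  0 < C (lamOf 2 15 u) ∧ ¬ EndsWithTMP u

/-- The playable words for Ann in the nonrepetitive game over `Fin 4` against Ben's
strategy `φ`: words produced by a sequence of Ann moves (Ann plays first, then after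
each word `v` left by Ann, Ben appends `φ v` and Ann answers with some letter `a`)
all of whose intermediate words after Ann's moves satisfy `GoodNR`. -/
inductive PlayableNR (φ : List (Fin 4) → Fin 4) (C : List (Fin 4) → ℝ) :
    List (Fin 4) → Prop
  | base (a : Fin 4) : GoodNR C [a] → PlayableNR φ C [a]
  | step {v : List (Fin 4)} (a : Fin 4) :
      PlayableNR φ C v → GoodNR C (v ++ [φ v, a]) → PlayableNR φ C (v ++ [φ v, a])

/-- `S_n`: the set of playable words of length `2n - 1`. -/
def SsetNR (φ : List (Fin 4) → Fin 4) (C : List (Fin 4) → ℝ) (n : ℕ) :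
    Set (List (Fin 4)) :=
  {v | PlayableNR φ C v ∧ v.length = 2 * n - 1}

/-- `Ŝ_n = Σ_{w ∈ Λ} C_w · |{u ∈ S_n : Λ(u) = w}| = Σ_{v ∈ S_n} C_{Λ(v)}`. -/
noncomputable def ShatNR (φ : List (Fin 4) → Fin 4) (C : List (Fin 4) → ℝ) (n : ℕ) : ℝ :=
  ∑ᶠ v ∈ SsetNR φ C n, C (lamOf 2 15 v)

/-!
Up to a permutation of the alphabet, `Λ(w)` is the longest suffix of `w` from which a short square
can still grow, so the inequality on the weights passes from `Λ(v)` to `v` itself: after a full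
round, the extensions of `v ∈ S_n` without short squares have total weight at least `α C_{Λ(v)}`.
Among those of positive weight, the ones that fail to be playable end with a `2⁻`-power `u a u`.
Its period `q = |u| + 1` exceeds `15`, for otherwise `a` would complete a short square in every
continuation and the weight would vanish.

As `φ` fixes Ben's moves, such a word is determined by `q` and by its playable prefix of length
`2m - 1`, where `m = n + 1 - ⌊q / 2⌋ ≤ n - 7`. Hence there are at most `2 ∑_{m ≤ n - 7} #S_m` of
them. If the positive weights lie between `c` and `M`, then each of them weighs at most `M`, while
`c #S_m ≤ Ŝ_m` and, better, `c #S_m` is at most about `Ŝ_{m+1} / α`. If `Ŝ` has grown by the factor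
`β` in every earlier round, a geometric sum bounds the loss by `(α - β) Ŝ_n`.
-/

section Words

variable {A : Type*} {lo hi : ℕ} {s t w : List A}

theorem suffix_append_cases {l : List A} (h : t <:+ w ++ l) :
    t <:+ l ∨ ∃ t', t = t' ++ l ∧ t' <:+ w := by
  obtain ⟨r, hr⟩ := h
  rcases List.append_eq_append_iff.1 hr with ⟨t', hw, ht⟩ | ⟨r', -, hl⟩
  · exact Or.inr ⟨t', ht, r, hw.symm⟩
  · exact Or.inl ⟨r', hl.symm⟩

theorem HasSq.mono (h : HasSq lo hi t) (htw : t <:+: w) : HasSq lo hi w := by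
  obtain ⟨u, hlo, hhi, hu⟩ := h
  exact ⟨u, hlo, hhi, hu.trans htw⟩

theorem HasSq.map (h : HasSq lo hi w) (π : Equiv.Perm A) : HasSq lo hi (w.map π) := by
  obtain ⟨u, hlo, hhi, hu⟩ := h
  exact ⟨u.map π, by simpa using hlo, by simpa using hhi, by simpa using hu.map π⟩

theorem hasSq_map_iff (π : Equiv.Perm A) : HasSq lo hi (w.map π) ↔ HasSq lo hi w :=
  ⟨fun h => by simpa using h.map π.symm, fun h => h.map π⟩

theorem IsSq.map (h : IsSq lo hi w) (π : Equiv.Perm A) : IsSq lo hi (w.map π) := by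
  obtain ⟨u, hlo, hhi, rfl⟩ := h
  exact ⟨u.map π, by simpa using hlo, by simpa using hhi, List.map_append⟩

theorem IsSq.hasSq (h : IsSq lo hi s) : HasSq lo hi s := by
  obtain ⟨u, hlo, hhi, rfl⟩ := h
  exact ⟨u, hlo, hhi, List.infix_rfl⟩

theorem MinSq.map (h : MinSq lo hi s) (π : Equiv.Perm A) : MinSq lo hi (s.map π) := by
  refine ⟨h.1.map π, fun f hf hne hsq => ?_⟩
  refine h.2 (f.map π.symm) (by simpa using hf.map π.symm) ?_ (hsq.map π.symm)
  rintro rfl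
  exact hne (by simp)

theorem HasSq.exists_minSq_infix (h : HasSq lo hi w) : ∃ s, MinSq lo hi s ∧ s <:+: w := by
  obtain ⟨u, hlo, hhi, hu⟩ := h
  obtain ⟨s, ⟨hsw, hs⟩, hmin⟩ := exists_minimalFor_of_wellFoundedLT
    (fun s => s <:+: w ∧ IsSq lo hi s) List.length ⟨u ++ u, hu, u, hlo, hhi, rfl⟩
  refine ⟨s, ⟨hs, fun f hf hne hsq => hne ?_⟩, hsw⟩
  exact hf.eq_of_length_le (hmin ⟨hf.trans hsw, hsq⟩ hf.length_le)

end Words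

section LamOf

variable {A : Type*} {lo hi : ℕ} {t w w' : List A} {π : Equiv.Perm A}

/-- A proper prefix of a minimal square. The words of `Lam lo hi` are the normalized ones among
these, so they represent all of them up to a permutation of the alphabet. -/
def IsSqPrefix (lo hi : ℕ) (t : List A) : Prop :=
  ∃ s : List A, MinSq lo hi s ∧ t <+: s ∧ t ≠ s

theorem IsSqPrefix.map (h : IsSqPrefix lo hi t) (π : Equiv.Perm A) :
    IsSqPrefix lo hi (t.map π) := by
  obtain ⟨s, hs, hts, hne⟩ := h
  exact ⟨s.map π, hs.map π, hts.map π, (List.map_injective_iff.2 π.injective).ne hne⟩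

theorem IsSqPrefix.of_prefix (h : IsSqPrefix lo hi w) (htw : t <+: w) : IsSqPrefix lo hi t := by
  obtain ⟨s, hs, hws, hne⟩ := h
  refine ⟨s, hs, htw.trans hws, ?_⟩
  rintro rfl
  exact hne (hws.eq_of_length_le htw.length_le)

variable [LinearOrder A]

theorem exists_normalized_map [Finite A] (t : List A) :
    ∃ ρ : Equiv.Perm A, Normalized (t.map ρ) := by
  obtain ⟨ρ, hρ⟩ := Finite.exists_min fun π : Equiv.Perm A => t.map π
  refine ⟨ρ, fun π h => (hρ (ρ.trans π)).not_gt ?_⟩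
  simpa [List.map_map] using h

theorem nil_mem_lam_of_nonempty (h : (Lam (A := A) lo hi).Nonempty) : [] ∈ Lam (A := A) lo hi := by
  obtain ⟨v, -, hv⟩ := h
  exact ⟨fun π h => by simp at h, IsSqPrefix.of_prefix hv List.nil_prefix⟩

theorem lam_nonempty [Nonempty A] (hlo : 1 ≤ lo) (hlohi : lo ≤ hi) :
    (Lam (A := A) lo hi).Nonempty := by
  obtain ⟨a⟩ := ‹Nonempty A›
  have hsq : HasSq lo hi (List.replicate lo a ++ List.replicate lo a) :=
    ⟨List.replicate lo a, by simp, by simpa using hlohi, List.infix_rfl⟩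
  obtain ⟨s, hs, -⟩ := hsq.exists_minSq_infix
  refine ⟨[], fun π h => by simp at h, s, hs, List.nil_prefix, ?_⟩
  rintro rfl
  obtain ⟨u, hu, -, h⟩ := hs.1
  simp_all

/-- The words of `Λ` occurring as suffixes of `w` up to a permutation of the alphabet, of which
`lamOf lo hi w` is the longest. -/
def lamSuffixes (lo hi : ℕ) (w : List A) : Set (List A) :=
  {v | v ∈ Lam lo hi ∧ ∃ π : Equiv.Perm A, v.map π <:+ w}

theorem lamOf_spec (h : (Lam (A := A) lo hi).Nonempty) (w : List A) :
    lamOf lo hi w ∈ lamSuffixes lo hi w ∧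
      ∀ v ∈ lamSuffixes lo hi w, v.length ≤ (lamOf lo hi w).length := by
  have hbound : ∀ v ∈ lamSuffixes lo hi w, v.length ≤ w.length := by
    rintro v ⟨-, π, hπ⟩
    simpa using hπ.length_le
  have hfin : (List.length '' lamSuffixes lo hi w).Finite :=
    (Set.finite_Iic w.length).subset (Set.image_subset_iff.2 hbound)
  have hne : (lamSuffixes lo hi w).Nonempty :=
    ⟨[], nil_mem_lam_of_nonempty h, Equiv.refl A, by simp⟩
  obtain ⟨v, hv, hmax⟩ := Set.Finite.exists_maximalFor' List.length _ hfin hne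
  have hex : ∃ v ∈ lamSuffixes lo hi w, ∀ v' ∈ lamSuffixes lo hi w, v'.length ≤ v.length :=
    ⟨v, hv, fun v' hv' => (le_total _ _).elim id (hmax hv')⟩
  rw [lamOf, dif_pos (by exact hex)]
  exact hex.choose_spec

theorem lamOf_mem (h : (Lam (A := A) lo hi).Nonempty) (w : List A) :
    lamOf lo hi w ∈ Lam lo hi :=
  (lamOf_spec h w).1.1

theorem lamOf_congr (h : lamSuffixes lo hi w = lamSuffixes lo hi w') :
    lamOf lo hi w = lamOf lo hi w' :=
  congrArg (fun S : Set (List A) =>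
    if h : ∃ v, v ∈ S ∧ ∀ v', v' ∈ S → v'.length ≤ v.length then h.choose else []) h

theorem lamSuffixes_subset_map (w : List A) (π : Equiv.Perm A) :
    lamSuffixes lo hi w ⊆ lamSuffixes lo hi (w.map π) := by
  rintro v ⟨hv, ρ, hρ⟩
  exact ⟨hv, ρ.trans π, by simpa [List.map_map] using hρ.map π⟩

theorem lamOf_map (w : List A) (π : Equiv.Perm A) : lamOf lo hi (w.map π) = lamOf lo hi w := by
  refine lamOf_congr (Set.Subset.antisymm ?_ (lamSuffixes_subset_map w π))
  simpa using lamSuffixes_subset_map (w.map π) π.symm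

variable [Finite A]

theorem IsSqPrefix.suffix_map_lamOf (ht : IsSqPrefix lo hi t) (htw : t <:+ w)
    (hπ : (lamOf lo hi w).map π <:+ w) : t <:+ (lamOf lo hi w).map π := by
  obtain ⟨ρ, hρ⟩ := exists_normalized_map t
  have hmem : t.map ρ ∈ Lam lo hi := ⟨hρ, ht.map ρ⟩
  have hlen := (lamOf_spec ⟨_, hmem⟩ w).2 (t.map ρ) ⟨hmem, ρ.symm, by simpa using htw⟩
  exact List.suffix_of_suffix_length_le htw hπ (by simpa using hlen)

theorem hasSq_map_lamOf_append_iff (hw : ¬ HasSq lo hi w) (hπ : (lamOf lo hi w).map π <:+ w)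
    (l : List A) : HasSq lo hi ((lamOf lo hi w).map π ++ l) ↔ HasSq lo hi (w ++ l) := by
  refine ⟨fun h => h.mono (List.suffix_append_self_iff.2 hπ).isInfix, fun h => ?_⟩
  obtain ⟨s, hs, hsw⟩ := h.exists_minSq_infix
  refine hs.1.hasSq.mono ?_
  rcases List.infix_append_iff.1 hsw with hsw | hsl | ⟨t, l', rfl, ht, hl'⟩
  · exact absurd (hs.1.hasSq.mono hsw) hw
  · exact hsl.trans (List.suffix_append _ l).isInfix
  · have hl'0 : l' ≠ [] := by
      rintro rfl
      exact hw (hs.1.hasSq.mono (by simpa using ht.isInfix))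
    have htpre : IsSqPrefix lo hi t := ⟨t ++ l', hs, List.prefix_append t l', by simpa using hl'0⟩
    exact ((List.suffix_append_self_iff.2 (htpre.suffix_map_lamOf ht hπ)).isInfix).trans
      ((List.prefix_append_right_inj _).2 hl').isInfix

theorem lamOf_map_lamOf_append (hπ : (lamOf lo hi w).map π <:+ w) (l : List A) :
    lamOf lo hi ((lamOf lo hi w).map π ++ l) = lamOf lo hi (w ++ l) := by
  refine lamOf_congr (Set.Subset.antisymm ?_ ?_) <;> rintro v ⟨hv, ρ, hρ⟩ <;>
    refine ⟨hv, ρ, ?_⟩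
  · exact hρ.trans (List.suffix_append_self_iff.2 hπ)
  · rcases suffix_append_cases hρ with hl | ⟨t, hvt, htw⟩
    · exact hl.trans (List.suffix_append _ l)
    · have hvpre : IsSqPrefix lo hi (t ++ l) := hvt ▸ IsSqPrefix.map hv.2 ρ
      have htpre := hvpre.of_prefix (List.prefix_append t l)
      exact hvt ▸ List.suffix_append_self_iff.2 (htpre.suffix_map_lamOf htw hπ)

end LamOf

section Growth

variable {A : Type*} [LinearOrder A] [Fintype A] {lo hi : ℕ} {α : ℝ} {C : List A → ℝ}

/-- The inequality `α C_v ≤ min_a Σ_b C_{Λ(vab)}` for all `v ∈ Λ`, where `b` ranges over the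
letters for which `vab` contains no square of period between `lo` and `hi`. -/
def GrowsBy (lo hi : ℕ) (α : ℝ) (C : List A → ℝ) : Prop :=
  ∀ v ∈ Lam lo hi, ∀ a : A, α * C v ≤
    ∑ b : A, if ¬ HasSq lo hi (v ++ [a, b]) then C (lamOf lo hi (v ++ [a, b])) else 0

theorem GrowsBy.le_sum (hC : GrowsBy lo hi α C) (hΛ : (Lam (A := A) lo hi).Nonempty)
    {w : List A} (hw : ¬ HasSq lo hi w) (a : A) :
    α * C (lamOf lo hi w) ≤
      ∑ b : A, if ¬ HasSq lo hi (w ++ [a, b]) then C (lamOf lo hi (w ++ [a, b])) else 0 := by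
  obtain ⟨π, hπ⟩ := (lamOf_spec hΛ w).1.2
  refine (hC _ (lamOf_mem hΛ w) (π.symm a)).trans_eq (Fintype.sum_equiv π _ _ fun b => ?_)
  have hmap : (lamOf lo hi w ++ [π.symm a, b]).map π = (lamOf lo hi w).map π ++ [a, π b] := by
    simp
  rw [← hasSq_map_iff π, ← lamOf_map (_ ++ _) π, hmap, hasSq_map_lamOf_append_iff hw hπ,
    lamOf_map_lamOf_append hπ]

end Growth

section TwoMinusPowers

variable {A : Type*} {q : ℕ} {x x' y z : List A}

/-- `x` ends with a `2⁻`-power of period `q`: a word `u a u` with `a` a letter and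
`|u| + 1 = q`, which `a` completes to the square `u a u a`. For `q = 1` this word is the single
letter `a`, too short for a `2⁻`-power. -/
def EndsWithTMPOfPeriod (q : ℕ) (x : List A) : Prop :=
  ∃ (u : List A) (a : A), u.length + 1 = q ∧ u ++ a :: u <:+ x

theorem endsWithTMP_iff : EndsWithTMP x ↔ ∃ q, 2 ≤ q ∧ EndsWithTMPOfPeriod q x := by
  constructor
  · rintro ⟨w, hwx, hw3, a, z, hz0, hwz⟩
    obtain ⟨u, b, rfl⟩ := (List.eq_nil_or_concat' z).resolve_left hz0
    obtain ⟨rfl, -⟩ : w = u ++ b :: u ∧ [a] = [b] :=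
      List.append_inj' (hwz.trans (by simp)) rfl
    exact ⟨u.length + 1, by simp at hw3; omega, u, b, rfl, hwx⟩
  · rintro ⟨q, hq, u, a, rfl, hux⟩
    exact ⟨u ++ a :: u, hux, by simp; omega, a, u ++ [a], by simp, by simp⟩

theorem endsWithTMPOfPeriod_of_square_suffix (hz : z ≠ []) (hzx : z ++ z <:+ x) :
    EndsWithTMPOfPeriod z.length x := by
  obtain ⟨a, u, rfl⟩ := List.exists_cons_of_ne_nil hz
  exact ⟨u, a, rfl, (List.suffix_cons a _).trans hzx⟩

theorem EndsWithTMPOfPeriod.two_mul_le (h : EndsWithTMPOfPeriod q x) :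
    2 * q ≤ x.length + 1 := by
  obtain ⟨u, a, rfl, hux⟩ := h
  have hlen := hux.length_le
  simp only [List.length_append, List.length_cons] at hlen
  omega

theorem EndsWithTMPOfPeriod.exists_square_suffix_concat (h : EndsWithTMPOfPeriod q x) :
    ∃ (z : List A) (a : A), z.length = q ∧ z ++ z <:+ x ++ [a] := by
  obtain ⟨u, a, rfl, hux⟩ := h
  exact ⟨u ++ [a], a, by simp, by
    simpa using (List.suffix_append_self_iff (l₃ := [a])).2 hux⟩

-- The last `q - 1` letters of a word ending with `u a u` repeat the block before the letter `a`.
theorem EndsWithTMPOfPeriod.eq_of_common_prefix (h : EndsWithTMPOfPeriod q x)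
    (h' : EndsWithTMPOfPeriod q x') (hlen : x.length = x'.length) (hyx : y <+: x)
    (hyx' : y <+: x') (hy : x.length + 1 ≤ y.length + q) : x = x' := by
  obtain ⟨u, a, rfl, r, rfl⟩ := h
  obtain ⟨u', a', hu', r', rfl⟩ := h'
  simp only [List.length_append, List.length_cons] at hlen hy
  have hru : r ++ (u ++ [a]) <+: y := by
    refine List.prefix_of_prefix_length_le ⟨u, by simp⟩ hyx ?_
    simp only [List.length_append, List.length_singleton]
    omega
  have hru' : r' ++ (u' ++ [a']) <+: r' ++ (u' ++ a' :: u') := ⟨u', by simp⟩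
  have heq : r ++ (u ++ [a]) = r' ++ (u' ++ [a']) := by
    refine (List.prefix_of_prefix_length_le (hru.trans hyx') hru' ?_).eq_of_length ?_ <;>
      simp only [List.length_append, List.length_singleton] <;> omega
  obtain ⟨rfl, hua⟩ := List.append_inj' heq (by simp; omega)
  obtain ⟨rfl, ha⟩ := List.append_inj' hua rfl
  rw [List.singleton_inj.1 ha]

variable [LinearOrder A] [Fintype A] {lo hi : ℕ} {α : ℝ} {C : List A → ℝ}

theorem GrowsBy.lt_period (hC : GrowsBy lo hi α C) (hα : 0 < α)
    (hΛ : (Lam (A := A) lo hi).Nonempty) (hx : ¬ HasSq lo hi x) (hpos : 0 < C (lamOf lo hi x))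
    (hlo : lo ≤ q) (hxq : EndsWithTMPOfPeriod q x) : hi < q := by
  by_contra! hhi
  obtain ⟨z, a, rfl, hz⟩ := hxq.exists_square_suffix_concat
  have hsq (b : A) : HasSq lo hi (x ++ [a, b]) :=
    ⟨z, hlo, hhi, hz.isInfix.trans ⟨[], [b], by simp⟩⟩
  have hle := hC.le_sum hΛ hx a
  simp only [hsq, not_true_eq_false, if_false, Finset.sum_const_zero] at hle
  exact (mul_pos hα hpos).not_ge hle

end TwoMinusPowers

section Play

variable {φ : List (Fin 4) → Fin 4} {C : List (Fin 4) → ℝ} {v x y : List (Fin 4)} {n : ℕ}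

theorem GoodNR.not_hasSq (h : GoodNR C v) : ¬ HasSq 2 15 v :=
  fun ⟨u, hlo, _, hu⟩ => h.1 u hlo hu

theorem GoodNR.square_suffix (hv : GoodNR C v) {c b : Fin 4} {z : List (Fin 4)}
    (hz : 2 ≤ z.length) (hzx : z ++ z <:+: v ++ [c, b]) : z ++ z <:+ v ++ [c, b] := by
  rw [List.append_cons] at hzx ⊢
  rcases List.infix_concat_iff.1 hzx with hsuf | hzx
  · exact hsuf
  rcases List.infix_concat_iff.1 hzx with hsuf | hzv
  · rcases List.suffix_concat_iff.1 hsuf with hnil | ⟨t, ht, htv⟩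
    · simp_all
    · have hlen := congrArg List.length ht
      simp only [List.length_append, List.length_singleton] at hlen
      have hz0 : z ≠ [] := List.ne_nil_of_length_pos (by omega)
      exact absurd ⟨t, htv, by omega, c, z, hz0, ht.symm⟩ hv.2.2
  · exact absurd hzv (hv.1 z hz)

theorem GoodNR.endsWithTMP_of_not_goodNR (hv : GoodNR C v) {c b : Fin 4}
    (hpos : 0 < C (lamOf 2 15 (v ++ [c, b]))) (hbad : ¬ GoodNR C (v ++ [c, b])) :
    EndsWithTMP (v ++ [c, b]) := by
  by_contra htmp
  refine hbad ⟨fun z hz hzx => htmp (endsWithTMP_iff.2 ⟨z.length, hz, ?_⟩), hpos, htmp⟩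
  exact endsWithTMPOfPeriod_of_square_suffix (by rintro rfl; simp at hz) (hv.square_suffix hz hzx)

theorem PlayableNR.goodNR (h : PlayableNR φ C v) : GoodNR C v := by
  cases h <;> assumption

theorem PlayableNR.odd_length (h : PlayableNR φ C v) : Odd v.length := by
  induction h with
  | base => simp
  | step a _ _ ih => simpa [← add_assoc, Nat.odd_add_one] using ih

theorem prefix_append_pair_iff {A : Type*} {y v : List A} {c b : A} :
    y <+: v ++ [c, b] ↔ y = v ++ [c, b] ∨ y = v ++ [c] ∨ y <+: v := by
  rw [List.append_cons, List.prefix_concat_iff, List.prefix_concat_iff]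

theorem PlayableNR.of_prefix (h : PlayableNR φ C v) (hyv : y <+: v) (hy : Odd y.length) :
    PlayableNR φ C y := by
  induction h with
  | base a ha =>
    rcases List.prefix_concat_iff (l₂ := []).1 hyv with rfl | hnil
    · exact .base a ha
    · simp_all
  | @step v a hv ha ih =>
    rcases prefix_append_pair_iff.1 hyv with rfl | rfl | hyv
    · exact hv.step a ha
    · simp [Nat.odd_add_one, hv.odd_length] at hy
    · exact ih hyv

/-- Ben, who moves after every word of odd length, played `φ` all along `x`. -/
def FollowsStrategy {A : Type*} (φ : List A → A) (x : List A) : Prop :=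
  ∀ (y : List A) (b : A), y ++ [b] <+: x → Odd y.length → b = φ y

theorem FollowsStrategy.concat_prefix (h : FollowsStrategy φ x) (hyx : y <+: x)
    (hy : Odd y.length) (hlt : y.length < x.length) : y ++ [φ y] <+: x := by
  obtain ⟨r, rfl⟩ := hyx
  cases r with
  | nil => simp at hlt
  | cons b r =>
    have hyb : y ++ [b] <+: y ++ b :: r := ⟨r, by simp⟩
    exact h y b hyb hy ▸ hyb

theorem FollowsStrategy.append_round (h : FollowsStrategy φ v) (hv : Odd v.length) (a : Fin 4) :
    FollowsStrategy φ (v ++ [φ v, a]) := by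
  intro y b hyb hy
  rcases prefix_append_pair_iff.1 hyb with heq | heq | hyv
  · obtain ⟨rfl, -⟩ := List.append_inj' (heq.trans (List.append_cons v _ _)) rfl
    simp [Nat.odd_add_one, hv] at hy
  · obtain ⟨rfl, hb⟩ := List.append_inj' heq rfl
    exact List.singleton_inj.1 hb
  · exact h y b hyv hy

theorem PlayableNR.followsStrategy (h : PlayableNR φ C v) : FollowsStrategy φ v := by
  induction h with
  | base a =>
    intro y b hyb hy
    have := hyb.length_le
    simp_all
  | step a hv _ ih => exact ih.append_round hv.odd_length a

end Play

section Counting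

variable {φ : List (Fin 4) → Fin 4} {C : List (Fin 4) → ℝ} {v x : List (Fin 4)} {m n q : ℕ}
  {α c M : ℝ}

theorem lam_two_fifteen_nonempty : (Lam (A := Fin 4) 2 15).Nonempty :=
  lam_nonempty (by norm_num) (by norm_num)

theorem finite_ssetNR (φ : List (Fin 4) → Fin 4) (C : List (Fin 4) → ℝ) (n : ℕ) :
    (SsetNR φ C n).Finite :=
  (List.finite_length_eq (Fin 4) (2 * n - 1)).subset fun _ h => h.2

/-- `S_n` as a finite set. -/
noncomputable def playableWords (φ : List (Fin 4) → Fin 4) (C : List (Fin 4) → ℝ) (n : ℕ) :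
    Finset (List (Fin 4)) :=
  (finite_ssetNR φ C n).toFinset

theorem mem_playableWords :
    v ∈ playableWords φ C n ↔ PlayableNR φ C v ∧ v.length = 2 * n - 1 :=
  (finite_ssetNR φ C n).mem_toFinset

theorem shatNR_eq_sum (φ : List (Fin 4) → Fin 4) (C : List (Fin 4) → ℝ) (n : ℕ) :
    ShatNR φ C n = ∑ v ∈ playableWords φ C n, C (lamOf 2 15 v) :=
  finsum_mem_eq_finite_toFinset_sum _ (finite_ssetNR φ C n)

/-- The words obtained from `v` when Ben plays `φ v` and Ann then plays any letter. -/
def rounds (φ : List (Fin 4) → Fin 4) (v : List (Fin 4)) : Finset (List (Fin 4)) :=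
  Finset.univ.image fun b => v ++ [φ v, b]

theorem mem_rounds : x ∈ rounds φ v ↔ ∃ b, v ++ [φ v, b] = x := by
  simp only [rounds, Finset.mem_image, Finset.mem_univ, true_and]

theorem sum_rounds (f : List (Fin 4) → ℝ) :
    ∑ x ∈ rounds φ v, f x = ∑ b, f (v ++ [φ v, b]) :=
  Finset.sum_image fun b _ b' _ h => by simpa using h

theorem pairwiseDisjoint_rounds (s : Set (List (Fin 4))) : s.PairwiseDisjoint (rounds φ) := by
  refine fun v _ w _ hvw => Finset.disjoint_left.2 fun x hxv hxw => hvw ?_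
  obtain ⟨b, rfl⟩ := mem_rounds.1 hxv
  obtain ⟨b', hb'⟩ := mem_rounds.1 hxw
  exact (List.append_inj' hb' rfl).1.symm

/-- The words of `rounds φ v` that remain playable when `v` is playable. -/
noncomputable def goodRounds (φ : List (Fin 4) → Fin 4) (C : List (Fin 4) → ℝ)
    (v : List (Fin 4)) : Finset (List (Fin 4)) :=
  {x ∈ rounds φ v | GoodNR C x}

/-- The words of `rounds φ v` counted by the weight inequality for `Λ(v)` although they are not
playable. -/
noncomputable def badRounds (φ : List (Fin 4) → Fin 4) (C : List (Fin 4) → ℝ)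
    (v : List (Fin 4)) : Finset (List (Fin 4)) :=
  {x ∈ rounds φ v | ¬ HasSq 2 15 x ∧ 0 < C (lamOf 2 15 x) ∧ ¬ GoodNR C x}

/-- The bad extensions of all words of `S_n`. -/
noncomputable def badWords (φ : List (Fin 4) → Fin 4) (C : List (Fin 4) → ℝ) (n : ℕ) :
    Finset (List (Fin 4)) :=
  (playableWords φ C n).biUnion (badRounds φ C)

theorem playableWords_succ (hn : 1 ≤ n) :
    playableWords φ C (n + 1) = (playableWords φ C n).biUnion (goodRounds φ C) := by
  ext x
  simp only [Finset.mem_biUnion, mem_playableWords, goodRounds, Finset.mem_filter, mem_rounds]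
  constructor
  · rintro ⟨hx, hlen⟩
    cases hx with
    | base => simp only [List.length_singleton] at hlen; omega
    | @step v a hv hgood =>
      simp only [List.length_append, List.length_cons, List.length_nil] at hlen
      exact ⟨v, ⟨hv, by omega⟩, ⟨a, rfl⟩, hgood⟩
  · rintro ⟨v, ⟨hv, hlen⟩, ⟨a, rfl⟩, hgood⟩
    exact ⟨hv.step a hgood, by simp; omega⟩

theorem shatNR_succ (hn : 1 ≤ n) :
    ShatNR φ C (n + 1) =
      ∑ v ∈ playableWords φ C n, ∑ x ∈ goodRounds φ C v, C (lamOf 2 15 x) := by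
  rw [shatNR_eq_sum, playableWords_succ hn, Finset.sum_biUnion]
  exact (pairwiseDisjoint_rounds _).mono fun _ => Finset.filter_subset _ _

theorem card_badWords :
    (badWords φ C n).card = ∑ v ∈ playableWords φ C n, (badRounds φ C v).card :=
  Finset.card_biUnion ((pairwiseDisjoint_rounds _).mono fun _ => Finset.filter_subset _ _)

theorem GrowsBy.le_sum_rounds (hC : GrowsBy 2 15 α C) (hv : GoodNR C v) :
    α * C (lamOf 2 15 v) ≤
      ∑ x ∈ goodRounds φ C v, C (lamOf 2 15 x) + ∑ x ∈ badRounds φ C v, C (lamOf 2 15 x) := by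
  refine (hC.le_sum lam_two_fifteen_nonempty hv.not_hasSq (φ v)).trans ?_
  rw [← sum_rounds fun x => if ¬ HasSq 2 15 x then C (lamOf 2 15 x) else 0, goodRounds, badRounds,
    Finset.sum_filter, Finset.sum_filter, ← Finset.sum_add_distrib]
  refine Finset.sum_le_sum fun x _ => ?_
  by_cases hgood : GoodNR C x
  · simp [hgood, hgood.not_hasSq]
  · by_cases hpos : 0 < C (lamOf 2 15 x)
    · simp [hgood, hpos]
    · by_cases hsq : HasSq 2 15 x <;> simp [hsq, hgood, hpos, not_lt.1 hpos]

theorem GrowsBy.mul_shatNR_le (hC : GrowsBy 2 15 α C) (hub : ∀ v ∈ Lam 2 15, C v ≤ M)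
    (hn : 1 ≤ n) :
    α * ShatNR φ C n - M * (badWords φ C n).card ≤ ShatNR φ C (n + 1) := by
  rw [shatNR_succ hn, shatNR_eq_sum, card_badWords, Nat.cast_sum, Finset.mul_sum, Finset.mul_sum,
    ← Finset.sum_sub_distrib]
  refine Finset.sum_le_sum fun v hv => ?_
  have hsum := hC.le_sum_rounds (φ := φ) (mem_playableWords.1 hv).1.goodNR
  have hbad := Finset.sum_le_card_nsmul (badRounds φ C v) _ M fun x _ =>
    hub _ (lamOf_mem lam_two_fifteen_nonempty x)
  rw [nsmul_eq_mul] at hbad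
  linarith

theorem GoodNR.le_weight (hlb : ∀ v ∈ Lam 2 15, 0 < C v → c ≤ C v) (hv : GoodNR C v) :
    c ≤ C (lamOf 2 15 v) :=
  hlb _ (lamOf_mem lam_two_fifteen_nonempty v) hv.2.1

theorem mul_card_le_shatNR (hlb : ∀ v ∈ Lam 2 15, 0 < C v → c ≤ C v) (n : ℕ) :
    c * (playableWords φ C n).card ≤ ShatNR φ C n := by
  rw [shatNR_eq_sum, mul_comm, ← nsmul_eq_mul]
  exact Finset.card_nsmul_le_sum _ _ _ fun v hv =>
    (mem_playableWords.1 hv).1.goodNR.le_weight hlb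

-- A word without bad extensions passes on at least `α c`; any other word of `S_n` is offset by one
-- of its bad extensions.
theorem GrowsBy.mul_card_le (hC : GrowsBy 2 15 α C) (hα : 0 < α) (hc : 0 < c)
    (hlb : ∀ v ∈ Lam 2 15, 0 < C v → c ≤ C v) (hn : 1 ≤ n) :
    α * (c * (playableWords φ C n).card - c * (badWords φ C n).card) ≤ ShatNR φ C (n + 1) := by
  have hterm (v : List (Fin 4)) (hv : v ∈ playableWords φ C n) :
      α * (c * (1 - (badRounds φ C v).card)) ≤ ∑ x ∈ goodRounds φ C v, C (lamOf 2 15 x) := by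
    have hgood := (mem_playableWords.1 hv).1.goodNR
    rcases (badRounds φ C v).eq_empty_or_nonempty with hempty | hne
    · have hsum := hC.le_sum_rounds (φ := φ) hgood
      rw [hempty, Finset.sum_empty, add_zero] at hsum
      rw [hempty, Finset.card_empty, Nat.cast_zero, sub_zero, mul_one]
      exact (mul_le_mul_of_nonneg_left (hgood.le_weight hlb) hα.le).trans hsum
    · have hcard : (1 : ℝ) ≤ (badRounds φ C v).card := by exact_mod_cast hne.card_pos
      have hsum : 0 ≤ ∑ x ∈ goodRounds φ C v, C (lamOf 2 15 x) :=
        Finset.sum_nonneg fun x hx => (Finset.mem_filter.1 hx).2.2.1.le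
      refine le_trans ?_ hsum
      exact mul_nonpos_of_nonneg_of_nonpos hα.le
        (mul_nonpos_of_nonneg_of_nonpos hc.le (sub_nonpos.2 hcard))
  have hsum := Finset.sum_le_sum hterm
  rw [← shatNR_succ hn, ← Finset.mul_sum, ← Finset.mul_sum, Finset.sum_sub_distrib,
    Finset.sum_const, nsmul_one, ← Nat.cast_sum, ← card_badWords, mul_sub c] at hsum
  exact hsum

theorem exists_of_mem_badWords (hx : x ∈ badWords φ C n) :
    ∃ v b, v ∈ playableWords φ C n ∧ x = v ++ [φ v, b] ∧ ¬ HasSq 2 15 x ∧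
      0 < C (lamOf 2 15 x) ∧ ¬ GoodNR C x := by
  obtain ⟨v, hv, hxv⟩ := Finset.mem_biUnion.1 hx
  obtain ⟨hround, hbad⟩ := Finset.mem_filter.1 hxv
  obtain ⟨b, rfl⟩ := mem_rounds.1 hround
  exact ⟨v, b, hv, rfl, hbad⟩

theorem length_of_mem_badWords (hn : 1 ≤ n) (hx : x ∈ badWords φ C n) :
    x.length = 2 * n + 1 := by
  obtain ⟨v, b, hv, rfl, -⟩ := exists_of_mem_badWords hx
  have := (mem_playableWords.1 hv).2
  simp
  omega

theorem followsStrategy_of_mem_badWords (hx : x ∈ badWords φ C n) : FollowsStrategy φ x := by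
  obtain ⟨v, b, hv, rfl, -⟩ := exists_of_mem_badWords hx
  have hv := (mem_playableWords.1 hv).1
  exact hv.followsStrategy.append_round hv.odd_length b

theorem take_mem_playableWords (hm : 1 ≤ m) (hmn : m ≤ n) (hx : x ∈ badWords φ C n) :
    x.take (2 * m - 1) ∈ playableWords φ C m := by
  obtain ⟨v, b, hv, rfl, -⟩ := exists_of_mem_badWords hx
  obtain ⟨hv, hlen⟩ := mem_playableWords.1 hv
  have htake : (v.take (2 * m - 1)).length = 2 * m - 1 := List.length_take_of_le (by omega)
  rw [List.take_append_of_le_length (by omega)]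
  refine mem_playableWords.2 ⟨hv.of_prefix (List.take_prefix _ v) ?_, htake⟩
  rw [htake]
  exact ⟨m - 1, by omega⟩

-- The playable prefix of length `2m - 1` determines Ben's next letter, and these `2m` letters leave
-- at most the last `q - 1` undetermined, which the `2⁻`-power repeats from one period earlier.
theorem card_badWords_of_period_le (hm : 1 ≤ m) (hmn : m ≤ n) (hq : q / 2 + m = n + 1) :
    {x ∈ badWords φ C n | EndsWithTMPOfPeriod q x}.card ≤ (playableWords φ C m).card := by
  have hlen (x) (hx : x ∈ badWords φ C n) : (x.take (2 * m - 1)).length = 2 * m - 1 :=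
    List.length_take_of_le (by have := length_of_mem_badWords (hm.trans hmn) hx; omega)
  have hpre (x) (hx : x ∈ badWords φ C n) :
      x.take (2 * m - 1) ++ [φ (x.take (2 * m - 1))] <+: x := by
    have hx' := length_of_mem_badWords (hm.trans hmn) hx
    refine (followsStrategy_of_mem_badWords hx).concat_prefix (List.take_prefix _ x) ?_ ?_ <;>
      rw [hlen x hx]
    · exact ⟨m - 1, by omega⟩
    · omega
  refine Finset.card_le_card_of_injOn (fun x => x.take (2 * m - 1))
    (fun x hx => take_mem_playableWords hm hmn (Finset.mem_filter.1 hx).1) ?_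
  intro x hx x' hx' (htake : x.take (2 * m - 1) = x'.take (2 * m - 1))
  obtain ⟨hx, hxq⟩ := Finset.mem_filter.1 hx
  obtain ⟨hx', hxq'⟩ := Finset.mem_filter.1 hx'
  have hx_len := length_of_mem_badWords (hm.trans hmn) hx
  have hx_len' := length_of_mem_badWords (hm.trans hmn) hx'
  refine hxq.eq_of_common_prefix hxq' (hx_len.trans hx_len'.symm) (hpre x hx)
    (htake ▸ hpre x' hx') ?_
  rw [List.length_append, hlen x hx, List.length_singleton]
  omega

theorem GrowsBy.exists_period_of_mem_badWords (hC : GrowsBy 2 15 α C) (hα : 0 < α) (hn : 1 ≤ n)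
    (hx : x ∈ badWords φ C n) :
    ∃ q, 15 < q ∧ q ≤ n + 1 ∧ EndsWithTMPOfPeriod q x := by
  have hlen := length_of_mem_badWords hn hx
  obtain ⟨v, b, hv, rfl, hsq, hpos, hbad⟩ := exists_of_mem_badWords hx
  have htmp := (mem_playableWords.1 hv).1.goodNR.endsWithTMP_of_not_goodNR hpos hbad
  obtain ⟨q, hq, hxq⟩ := endsWithTMP_iff.1 htmp
  have hle := hxq.two_mul_le
  exact ⟨q, hC.lt_period hα lam_two_fifteen_nonempty hsq hpos hq hxq, by omega, hxq⟩

-- The periods `2k` and `2k + 1` are both charged to the playable words of length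
-- `2(n + 1 - k) - 1`, and `8 ≤ k` for a period exceeding `15`.
theorem GrowsBy.card_badWords_le (hC : GrowsBy 2 15 α C) (hα : 0 < α) (hn : 1 ≤ n) :
    (badWords φ C n).card ≤ 2 * ∑ m ∈ Finset.Icc 1 (n - 7), (playableWords φ C m).card := by
  let ofPeriod (q : ℕ) := {x ∈ badWords φ C n | EndsWithTMPOfPeriod q x}
  have hcover : badWords φ C n ⊆ (Finset.Icc 1 (n - 7)).biUnion fun m =>
      ofPeriod (2 * (n + 1 - m)) ∪ ofPeriod (2 * (n + 1 - m) + 1) := by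
    intro x hx
    obtain ⟨q, hlo, hhi, hxq⟩ := hC.exists_period_of_mem_badWords hα hn hx
    refine Finset.mem_biUnion.2 ⟨n + 1 - q / 2, Finset.mem_Icc.2 (by omega), ?_⟩
    rcases Nat.even_or_odd' q with ⟨k, rfl | rfl⟩
    · refine Finset.mem_union_left _ (Finset.mem_filter.2 ⟨hx, ?_⟩)
      convert hxq using 1
      omega
    · refine Finset.mem_union_right _ (Finset.mem_filter.2 ⟨hx, ?_⟩)
      convert hxq using 1
      omega
  rw [Finset.mul_sum]
  refine (Finset.card_le_card hcover).trans (Finset.card_biUnion_le.trans ?_)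
  refine Finset.sum_le_sum fun m hm => (Finset.card_union_le _ _).trans ?_
  obtain ⟨hm, hmn⟩ := Finset.mem_Icc.1 hm
  rw [two_mul (Finset.card _)]
  exact Nat.add_le_add (card_badWords_of_period_le hm (by omega) (by omega))
    (card_badWords_of_period_le hm (by omega) (by omega))

end Counting

section DelayedLoss

theorem sum_le_of_geometric_growth {t : ℕ → ℝ} {β : ℝ} {n : ℕ} (hβ : 1 < β) (ht : ∀ m, 0 ≤ t m)
    (hgrow : ∀ m, 1 ≤ m → m < n → β * t m ≤ t (m + 1)) (d : ℕ) {m : ℕ} (hm : m ≤ n) :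
    β ^ d * (β - 1) * ∑ i ∈ Finset.Icc 1 (m - d), t i ≤ β * t m := by
  induction d generalizing m with
  | zero =>
    induction m with
    | zero => simpa using mul_nonneg (zero_le_one.trans hβ.le) (ht 0)
    | succ m ih =>
      have ih := ih (by omega)
      simp only [pow_zero, one_mul, Nat.sub_zero] at ih ⊢
      rw [Finset.sum_Icc_succ_top (by omega), mul_add]
      rcases m.eq_zero_or_pos with rfl | hm0
      · simpa using mul_le_mul_of_nonneg_right (sub_le_self β zero_le_one) (ht 1)
      · linarith [hgrow m hm0 hm]
  | succ d ih =>
    rcases lt_or_ge m 2 with hm2 | hm2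
    · rw [Finset.Icc_eq_empty_of_lt (by omega), Finset.sum_empty, mul_zero]
      exact mul_nonneg (zero_le_one.trans hβ.le) (ht m)
    · obtain ⟨m, rfl⟩ := Nat.exists_eq_add_of_le' (one_le_two.trans hm2)
      rw [Nat.add_sub_add_right]
      calc β ^ (d + 1) * (β - 1) * ∑ i ∈ Finset.Icc 1 (m - d), t i
          = β * (β ^ d * (β - 1) * ∑ i ∈ Finset.Icc 1 (m - d), t i) := by ring
        _ ≤ β * (β * t m) := mul_le_mul_of_nonneg_left (ih (by omega)) (by linarith)
        _ ≤ β * t (m + 1) := mul_le_mul_of_nonneg_left (hgrow m (by omega) hm) (by linarith)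

theorem sum_succ_le_of_geometric_growth {s : ℕ → ℝ} {β : ℝ} {n r : ℕ} (hβ : 1 < β)
    (hs : ∀ m, 0 ≤ s m) (hgrow : ∀ m, 1 ≤ m → m < n → β * s m ≤ s (m + 1)) (hr : 1 ≤ r)
    (hn : 1 ≤ n) :
    β ^ r * (β - 1) * ∑ m ∈ Finset.Icc 1 (n - r), s (m + 1) ≤ β ^ 2 * s n := by
  obtain ⟨d, rfl⟩ := Nat.exists_eq_add_of_le' hr
  obtain ⟨k, rfl⟩ := Nat.exists_eq_add_of_le' hn
  rw [Nat.add_sub_add_right]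
  have h := sum_le_of_geometric_growth (t := fun m => s (m + 1)) hβ (fun m => hs (m + 1))
    (fun m _ hm => hgrow (m + 1) (by omega) (by omega)) d (le_refl k)
  calc β ^ (d + 1) * (β - 1) * ∑ m ∈ Finset.Icc 1 (k - d), s (m + 1)
      = β * (β ^ d * (β - 1) * ∑ m ∈ Finset.Icc 1 (k - d), s (m + 1)) := by ring
    _ ≤ β * (β * s (k + 1)) := mul_le_mul_of_nonneg_left h (by linarith)
    _ = β ^ 2 * s (k + 1) := by ring

variable {α β γ : ℝ} {r n : ℕ} {s K b : ℕ → ℝ}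

-- The loss at time `m` is small compared with `s (m + 1)`, so `K m` cannot exceed
-- `s (m + 1) / α` by much, which is better than `K m ≤ s m`.
theorem le_mul_succ_of_delayed_loss (hα : 0 < α) (hβ : 1 < β) (hs : ∀ m, 0 ≤ s m)
    (hKs : ∀ m, K m ≤ s m) (hb : ∀ m, 1 ≤ m → b m ≤ 2 * ∑ i ∈ Finset.Icc 1 (m - r), K i)
    (hK : ∀ m, 1 ≤ m → α * (K m - b m) ≤ s (m + 1))
    (hgrow : ∀ m, 1 ≤ m → m < n → β * s m ≤ s (m + 1)) {m : ℕ} (hm : 1 ≤ m) (hmn : m < n) :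
    K m ≤ (1 / α + 2 / (β ^ r * (β - 1))) * s (m + 1) := by
  have hβ0 : 0 < β := one_pos.trans hβ
  have hden : 0 < β ^ r * (β - 1) := mul_pos (pow_pos hβ0 r) (sub_pos.2 hβ)
  have hsum : β ^ r * (β - 1) * ∑ i ∈ Finset.Icc 1 (m - r), s i ≤ s (m + 1) := by
    have h := sum_le_of_geometric_growth hβ hs hgrow (r + 1) (m := m + 1) hmn
    rw [Nat.add_sub_add_right, pow_succ', mul_assoc, mul_assoc] at h
    rw [mul_assoc]
    exact le_of_mul_le_mul_left h hβ0
  have hloss : b m ≤ 2 / (β ^ r * (β - 1)) * s (m + 1) :=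
    calc b m ≤ 2 * ∑ i ∈ Finset.Icc 1 (m - r), K i := hb m hm
      _ ≤ 2 * ∑ i ∈ Finset.Icc 1 (m - r), s i := by gcongr; exact hKs _
      _ ≤ 2 * (s (m + 1) / (β ^ r * (β - 1))) := by
        gcongr
        exact (le_div_iff₀' hden).2 hsum
      _ = 2 / (β ^ r * (β - 1)) * s (m + 1) := by ring
  have hkeep : K m - b m ≤ 1 / α * s (m + 1) := by
    rw [one_div_mul_eq_div]
    exact (le_div_iff₀' hα).2 (hK m hm)
  linarith

theorem geometric_growth_of_delayed_loss (hα : 0 < α) (hβ : 1 < β) (hγ : 0 ≤ γ) (hr : 1 ≤ r)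
    (hs : ∀ n, 0 ≤ s n) (hKs : ∀ n, K n ≤ s n)
    (hb : ∀ n, 1 ≤ n → b n ≤ 2 * ∑ m ∈ Finset.Icc 1 (n - r), K m)
    (hK : ∀ n, 1 ≤ n → α * (K n - b n) ≤ s (n + 1))
    (hloss : ∀ n, 1 ≤ n → α * s n - γ * b n ≤ s (n + 1))
    (hαβ : β + 2 * γ * (1 / α + 2 / (β ^ r * (β - 1))) * β ^ 2 / (β ^ r * (β - 1)) ≤ α)
    (hn : 1 ≤ n) : β * s n ≤ s (n + 1) := by
  induction n using Nat.strong_induction_on with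
  | _ n ih =>
    have hβ0 : 0 < β := one_pos.trans hβ
    have hden : 0 < β ^ r * (β - 1) := mul_pos (pow_pos hβ0 r) (sub_pos.2 hβ)
    set κ := 1 / α + 2 / (β ^ r * (β - 1))
    have hκ0 : 0 ≤ κ := by positivity
    have hgrow (m : ℕ) (hm : 1 ≤ m) (hmn : m < n) : β * s m ≤ s (m + 1) := ih m hmn hm
    have hsum : ∑ m ∈ Finset.Icc 1 (n - r), s (m + 1) ≤ β ^ 2 * s n / (β ^ r * (β - 1)) :=
      (le_div_iff₀' hden).2 (sum_succ_le_of_geometric_growth hβ hs hgrow hr hn)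
    have hbn : b n ≤ 2 * (κ * (β ^ 2 * s n / (β ^ r * (β - 1)))) := by
      refine (hb n hn).trans (mul_le_mul_of_nonneg_left ?_ zero_le_two)
      refine le_trans ?_ (mul_le_mul_of_nonneg_left hsum hκ0)
      rw [Finset.mul_sum]
      refine Finset.sum_le_sum fun m hm => ?_
      obtain ⟨hm, hmn⟩ := Finset.mem_Icc.1 hm
      exact le_mul_succ_of_delayed_loss hα hβ hs hKs hb hK hgrow hm (by omega)
    calc β * s n ≤ α * s n - γ * (2 * (κ * (β ^ 2 * s n / (β ^ r * (β - 1))))) := by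
          have h := mul_le_mul_of_nonneg_right hαβ (hs n)
          rw [add_mul] at h
          refine le_sub_iff_add_le.2 (le_trans (le_of_eq ?_) h)
          ring
      _ ≤ α * s n - γ * b n := by gcongr
      _ ≤ s (n + 1) := hloss n hn

end DelayedLoss

theorem stmt_7_general {α β c M : ℝ} {C : List (Fin 4) → ℝ} (hα : 0 < α) (hβ : 1 < β)
    (hc : 0 < c) (hM : 0 ≤ M) (hub : ∀ v ∈ Lam 2 15, C v ≤ M)
    (hlb : ∀ v ∈ Lam 2 15, 0 < C v → c ≤ C v) (hC : GrowsBy 2 15 α C)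
    (hαβ : β + 2 * (M / c) * (1 / α + 2 / (β ^ 7 * (β - 1))) * β ^ 2 / (β ^ 7 * (β - 1)) ≤ α)
    (φ : List (Fin 4) → Fin 4) {n : ℕ} (hn : 1 ≤ n) :
    β * ShatNR φ C n ≤ ShatNR φ C (n + 1) := by
  refine geometric_growth_of_delayed_loss (K := fun n => c * (playableWords φ C n).card)
    (b := fun n => c * (badWords φ C n).card) hα hβ (div_nonneg hM hc.le) (by norm_num)
    (fun n => (by positivity : 0 ≤ c * _).trans (mul_card_le_shatNR hlb n))
    (mul_card_le_shatNR hlb) (fun n hn => ?_) (fun n hn => hC.mul_card_le hα hc hlb hn)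
    (fun n hn => ?_) hαβ hn
  · have hcard : ((badWords φ C n).card : ℝ) ≤
        2 * ∑ m ∈ Finset.Icc 1 (n - 7), ((playableWords φ C m).card : ℝ) := by
      exact_mod_cast hC.card_badWords_le hα hn
    rw [← Finset.mul_sum, mul_left_comm]
    exact mul_le_mul_of_nonneg_left hcard hc.le
  · rw [div_mul_comm, mul_div_cancel_left₀ _ hc.ne', mul_comm _ M]
    exact hC.mul_shatNR_le hub hn

/-- With coefficients as in the key lemma for the nonrepetitive game over `Fin 4`
(`p = 15`, `α = 12914/6541`, `γ = 10635/4441`), for any Ben strategy `φ` the weights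
satisfy `Ŝ_{n+1} ≥ (9/5)·Ŝ_n` for all `n ≥ 1`. -/
theorem stmt_7 (C : List (Fin 4) → ℝ)
    (hnn : ∀ v ∈ Lam 2 15, 0 ≤ C v)
    (hub : ∀ v ∈ Lam 2 15, C v ≤ 10635)
    (hlb : ∀ v ∈ Lam 2 15, C v = 0 ∨ 4441 ≤ C v)
    (hmin : ∀ v ∈ Lam 2 15, ∀ a : Fin 4,
      (12914 / 6541 : ℝ) * C v ≤
        ∑ b : Fin 4,
          if ¬ HasSq 2 15 (v ++ [a, b]) then C (lamOf 2 15 (v ++ [a, b])) else 0)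
    (φ : List (Fin 4) → Fin 4) :
    ∀ n : ℕ, 1 ≤ n → ShatNR φ C (n + 1) ≥ (9 / 5 : ℝ) * ShatNR φ C n := by
  intro n hn
  have hlb' : ∀ v ∈ Lam 2 15, 0 < C v → 4441 ≤ C v := fun v hv hpos =>
    (hlb v hv).resolve_left hpos.ne'
  exact stmt_7_general (by norm_num) (by norm_num) (by norm_num) (by norm_num) hub hlb' hmin
    (by norm_num) φ hn
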